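/- Set u₀(x,t) = Σ_{n≥1} f_n sin(nx) ∫₀^t e^{-n²(t-s)} r₀(s) ds. Then u₀ is well defined and continuous on Π̄, and for every family (u_ω)_{ω≥1}, where u_ω is a classical solution of ∂u/∂t = ∂²u/∂x² + f(x)(r₀(t) + r₁(t,ωt)) in Π with u|_Γ = 0, one has sup_{(x,t)∈Π̄} |u_ω(x,t) − u₀(x,t)| → 0 as ω → ∞. -/

import Mathlib

open Real Set

noncomputable section

/-- Mean value of a function over the period `[0, 2π]`. -/
def pmean (g : ℝ → ℝ) : ℝ := (2 * π)⁻¹ * ∫ τ in (0:ℝ)..(2 * π), g τ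

/-- `u` is a classical solution of `∂u/∂t = ∂²u/∂x² + F(x,t)` in `Π = (0,π)×(0,T)`
vanishing on the parabolic boundary `Γ`. -/
def IsClassicalSolution (T : ℝ) (F : ℝ → ℝ → ℝ) (u : ℝ → ℝ → ℝ) : Prop :=
  ContinuousOn (fun p : ℝ × ℝ => u p.1 p.2) (Icc 0 π ×ˢ Icc 0 T) ∧
  (∀ x ∈ Icc (0:ℝ) π, u x 0 = 0) ∧
  (∀ t ∈ Icc (0:ℝ) T, u 0 t = 0 ∧ u π t = 0) ∧
  ∃ ut ux uxx : ℝ → ℝ → ℝ,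
    ContinuousOn (fun p : ℝ × ℝ => ut p.1 p.2) (Ioo 0 π ×ˢ Ioo 0 T) ∧
    ContinuousOn (fun p : ℝ × ℝ => uxx p.1 p.2) (Ioo 0 π ×ˢ Ioo 0 T) ∧
    ∀ x ∈ Ioo (0:ℝ) π, ∀ t ∈ Ioo (0:ℝ) T,
      HasDerivAt (fun t' => u x t') (ut x t) t ∧
      HasDerivAt (fun x' => u x' t) (ux x t) x ∧
      HasDerivAt (fun x' => ux x' t) (uxx x t) x ∧
      ut x t = uxx x t + F x t

/-! A source `f(x) r(t)` admits at most one classical solution with zero data, namely the sine series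
of `f` whose modes are damped by Duhamel integrals of `r`. For a sine polynomial this series is a
finite sum of explicit solutions. In general `f` is a uniform limit of sine polynomials, because it
vanishes at both ends; the maximum principle controls the error in the solution, and the bound
`R / n²` on the Duhamel integrals controls the error in the series.

By linearity in `r`, the difference `u_ω - u₀` is the series for `r₁(t, ωt)`. On a time cell of
length `2π / ω` the slow variable of `r₁` is nearly constant and the fast one runs through a full
period, so the zero mean makes every Duhamel integral of `r₁(t, ωt)` tend to zero uniformly in `t`.
The series is dominated by a multiple of `∑ 1 / n²`, hence tends to zero uniformly as well.
-/

open Filter Topology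

section Averaging

theorem apply_toIcoMod_of_periodicOn_Ici {β : Type*} {P : ℝ} (hP : 0 < P) {f : ℝ → β}
    (hf : ∀ τ ∈ Ici (0 : ℝ), f (τ + P) = f τ) {τ : ℝ} (hτ : 0 ≤ τ) :
    f (toIcoMod hP 0 τ) = f τ := by
  have hmul (n : ℕ) {σ : ℝ} (hσ : 0 ≤ σ) : f (σ + n • P) = f σ := by
    induction n with
    | zero => simp
    | succ n ih => rw [succ_nsmul, ← add_assoc, hf _ (mem_Ici.2 (by positivity)), ih]
  obtain ⟨n, hn⟩ : ∃ n : ℕ, toIcoDiv hP 0 τ = n := by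
    refine Int.eq_ofNat_of_zero_le ?_
    rw [toIcoDiv_eq_floor, sub_zero]
    positivity
  have hdecomp := toIcoMod_add_toIcoDiv_zsmul hP 0 τ
  rw [hn, natCast_zsmul] at hdecomp
  rw [← hdecomp, hmul n (toIcoMod_mem_Ico' hP τ).1, hdecomp]

variable {E : Type*} [NormedAddCommGroup E]

theorem integral_period_of_periodicOn_Ici [NormedSpace ℝ E] {P : ℝ} (hP : 0 < P) {f : ℝ → E}
    (hf : ∀ τ ∈ Ici (0 : ℝ), f (τ + P) = f τ) {a : ℝ} (ha : 0 ≤ a) :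
    ∫ τ in a..a + P, f τ = ∫ τ in (0 : ℝ)..P, f τ := by
  have hext {b : ℝ} (hb : 0 ≤ b) :
      ∫ τ in b..b + P, f (toIcoMod hP 0 τ) = ∫ τ in b..b + P, f τ :=
    intervalIntegral.integral_congr fun τ hτ ↦ apply_toIcoMod_of_periodicOn_Ici hP hf <|
      hb.trans (uIcc_of_le (by linarith : b ≤ b + P) ▸ hτ).1
  have hperiodic : Function.Periodic (fun τ ↦ f (toIcoMod hP 0 τ)) P :=
    (toIcoMod_periodic hP 0).comp f
  rw [← hext ha, hperiodic.intervalIntegral_add_eq a 0, hext le_rfl, zero_add]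

theorem norm_integral_le_of_norm_integral_cell_le [NormedSpace ℝ E] {g : ℝ → E} {t h δ M : ℝ}
    (hh : 0 < h) (ht : 0 ≤ t) (hg : IntervalIntegrable g MeasureTheory.volume 0 t)
    (hcell : ∀ a, 0 ≤ a → a + h ≤ t → ‖∫ s in a..a + h, g s‖ ≤ δ * h)
    (hδ : 0 ≤ δ) (hM : ∀ s ∈ Icc 0 t, ‖g s‖ ≤ M) :
    ‖∫ s in (0 : ℝ)..t, g s‖ ≤ δ * t + M * h := by
  set n := ⌊t / h⌋₊
  have hle : n * h ≤ t := (le_div_iff₀ hh).1 (Nat.floor_le (by positivity))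
  have hlt : t < (n + 1) * h := (div_lt_iff₀ hh).1 (Nat.lt_floor_add_one _)
  have hn : (0 : ℝ) ≤ n * h := by positivity
  have hint {a b : ℝ} (ha : 0 ≤ a) (hab : a ≤ b) (hb : b ≤ t) :
      IntervalIntegrable g MeasureTheory.volume a b :=
    hg.mono_set (by rw [uIcc_of_le hab, uIcc_of_le ht]; exact Icc_subset_Icc ha hb)
  have hnode {k : ℕ} (hk : k < n) : ((k + 1 : ℕ) : ℝ) * h ≤ t :=
    le_trans (by gcongr; exact hk) hle
  have hcells : ‖∫ s in (0 : ℝ)..n * h, g s‖ ≤ n * (δ * h) := by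
    have hsum := intervalIntegral.sum_integral_adjacent_intervals (f := g)
      (μ := MeasureTheory.volume) (a := fun k ↦ (k : ℝ) * h) (n := n) fun k hk ↦
        hint (by positivity) (by gcongr; exact k.le_succ) (hnode hk)
    rw [Nat.cast_zero, zero_mul] at hsum
    rw [← hsum]
    refine (norm_sum_le_of_le _ (n := fun _ ↦ δ * h) fun k hk ↦ ?_).trans_eq (by simp)
    have hstep : ((k + 1 : ℕ) : ℝ) * h = k * h + h := by push_cast; ring
    have hk' := hnode (Finset.mem_range.1 hk)
    rw [hstep] at hk' ⊢
    exact hcell _ (by positivity) hk'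
  have hrest : ‖∫ s in (n * h : ℝ)..t, g s‖ ≤ M * (t - n * h) := by
    rw [← abs_of_nonneg (sub_nonneg.2 hle)]
    refine intervalIntegral.norm_integral_le_of_norm_le_const fun s hs ↦ ?_
    rw [uIoc_of_le hle] at hs
    exact hM s ⟨hn.trans hs.1.le, hs.2⟩
  have hM0 : 0 ≤ M := (norm_nonneg _).trans (hM 0 (left_mem_Icc.2 ht))
  calc ‖∫ s in (0 : ℝ)..t, g s‖
      = ‖(∫ s in (0 : ℝ)..n * h, g s) + ∫ s in (n * h : ℝ)..t, g s‖ := by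
        rw [intervalIntegral.integral_add_adjacent_intervals
          (hint le_rfl hn hle) (hint hn hle le_rfl)]
    _ ≤ n * (δ * h) + M * (t - n * h) := norm_add_le_of_le hcells hrest
    _ = δ * (n * h) + M * (t - n * h) := by ring
    _ ≤ δ * t + M * h := by gcongr; linarith

variable {p : ℝ → ℝ → E} {T P : ℝ}

theorem exists_norm_le_of_periodicOn_Ici (hP : 0 < P)
    (hp : ContinuousOn (fun q : ℝ × ℝ ↦ p q.1 q.2) (Icc 0 T ×ˢ Ici 0))
    (hper : ∀ t ∈ Icc 0 T, ∀ τ ∈ Ici (0 : ℝ), p t (τ + P) = p t τ) :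
    ∃ M, ∀ t ∈ Icc 0 T, ∀ τ ∈ Ici (0 : ℝ), ‖p t τ‖ ≤ M := by
  obtain ⟨M, hM⟩ := (isCompact_Icc.prod isCompact_Icc).exists_bound_of_continuousOn
    (hp.mono (prod_mono_right (Icc_subset_Ici_self : Icc 0 P ⊆ Ici 0)))
  refine ⟨M, fun t ht τ hτ ↦ ?_⟩
  rw [← apply_toIcoMod_of_periodicOn_Ici hP (hper t ht) hτ]
  exact hM (t, toIcoMod hP 0 τ) ⟨ht, Ico_subset_Icc_self (toIcoMod_mem_Ico' hP τ)⟩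

theorem exists_modulus_of_periodicOn_Ici (hP : 0 < P)
    (hp : ContinuousOn (fun q : ℝ × ℝ ↦ p q.1 q.2) (Icc 0 T ×ˢ Ici 0))
    (hper : ∀ t ∈ Icc 0 T, ∀ τ ∈ Ici (0 : ℝ), p t (τ + P) = p t τ) {δ : ℝ} (hδ : 0 < δ) :
    ∃ d > 0, ∀ s ∈ Icc 0 T, ∀ s' ∈ Icc 0 T, |s - s'| ≤ d → ∀ τ ∈ Ici (0 : ℝ),
      ‖p s τ - p s' τ‖ ≤ δ := by
  have hunif := (isCompact_Icc.prod isCompact_Icc).uniformContinuousOn_of_continuous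
    (hp.mono (prod_mono_right (Icc_subset_Ici_self : Icc 0 P ⊆ Ici 0)))
  obtain ⟨d, hd, hclose⟩ := Metric.uniformContinuousOn_iff_le.1 hunif δ hδ
  refine ⟨d, hd, fun s hs s' hs' hss' τ hτ ↦ ?_⟩
  rw [← apply_toIcoMod_of_periodicOn_Ici hP (hper s hs) hτ,
    ← apply_toIcoMod_of_periodicOn_Ici hP (hper s' hs') hτ, ← dist_eq_norm]
  have hσ : toIcoMod hP 0 τ ∈ Icc 0 P := Ico_subset_Icc_self (toIcoMod_mem_Ico' hP τ)
  exact hclose (s, _) ⟨hs, hσ⟩ (s', _) ⟨hs', hσ⟩ (by simpa [Prod.dist_eq, dist_eq_norm, hd.le])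

theorem continuousOn_along_fast_phase
    (hp : ContinuousOn (fun q : ℝ × ℝ ↦ p q.1 q.2) (Icc 0 T ×ˢ Ici 0)) {ω : ℝ} (hω : 0 ≤ ω) :
    ContinuousOn (fun s ↦ p s (ω * s)) (Icc 0 T) :=
  hp.comp (f := fun s ↦ (s, ω * s)) (by fun_prop) fun _ hs ↦ ⟨hs, mul_nonneg hω hs.1⟩

variable [NormedSpace ℝ E]

theorem norm_integral_period_le {ω a δ : ℝ} (hP : 0 < P) (hω : 0 < ω)
    (hp : ContinuousOn (fun q : ℝ × ℝ ↦ p q.1 q.2) (Icc 0 T ×ˢ Ici 0))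
    (hper : ∀ t ∈ Icc 0 T, ∀ τ ∈ Ici (0 : ℝ), p t (τ + P) = p t τ)
    (hmean : ∀ t ∈ Icc 0 T, ∫ τ in (0 : ℝ)..P, p t τ = 0) (ha : 0 ≤ a) (haT : a + P / ω ≤ T)
    (hδ : ∀ s ∈ Icc a (a + P / ω), ∀ τ ∈ Ici (0 : ℝ), ‖p s τ - p a τ‖ ≤ δ) :
    ‖∫ s in a..a + P / ω, p s (ω * s)‖ ≤ δ * (P / ω) := by
  have hh : 0 < P / ω := div_pos hP hω
  have hcell : Icc a (a + P / ω) ⊆ Icc 0 T := Icc_subset_Icc ha haT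
  have ha_mem : a ∈ Icc 0 T := hcell (left_mem_Icc.2 (by linarith))
  -- With the slow variable frozen at `a`, the cell is exactly one period of the fast variable.
  have hfrozen : ∫ s in a..a + P / ω, p a (ω * s) = 0 := by
    rw [intervalIntegral.integral_comp_mul_left _ hω.ne', mul_add, mul_div_cancel₀ P hω.ne',
      integral_period_of_periodicOn_Ici hP (hper a ha_mem) (by positivity), hmean a ha_mem,
      smul_zero]
  have hfrozen_cont : ContinuousOn (fun s ↦ p a (ω * s)) (Icc a (a + P / ω)) :=
    hp.comp (f := fun s ↦ (a, ω * s)) (by fun_prop) fun s hs ↦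
      ⟨ha_mem, mul_nonneg hω.le (hcell hs).1⟩
  rw [← sub_zero (∫ s in a..a + P / ω, p s (ω * s)), ← hfrozen,
    ← intervalIntegral.integral_sub
      (((continuousOn_along_fast_phase hp hω.le).mono hcell).intervalIntegrable_of_Icc
        (by linarith))
      (hfrozen_cont.intervalIntegrable_of_Icc (by linarith))]
  refine (intervalIntegral.norm_integral_le_of_norm_le_const (C := δ) fun s hs ↦ ?_).trans_eq
    (by rw [add_sub_cancel_left, abs_of_pos hh])
  have hs' := Ioc_subset_Icc_self (uIoc_of_le (by linarith : a ≤ a + P / ω) ▸ hs)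
  exact hδ s hs' _ (mul_nonneg hω.le (hcell hs').1)

theorem tendstoUniformlyOn_integral_of_mean_zero (hP : 0 < P)
    (hp : ContinuousOn (fun q : ℝ × ℝ ↦ p q.1 q.2) (Icc 0 T ×ˢ Ici 0))
    (hper : ∀ t ∈ Icc 0 T, ∀ τ ∈ Ici (0 : ℝ), p t (τ + P) = p t τ)
    (hmean : ∀ t ∈ Icc 0 T, ∫ τ in (0 : ℝ)..P, p t τ = 0) :
    TendstoUniformlyOn (fun ω t ↦ ∫ s in (0 : ℝ)..t, p s (ω * s)) (fun _ ↦ 0) atTop (Icc 0 T) := by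
  refine Metric.tendstoUniformlyOn_iff.2 fun ε hε ↦ ?_
  obtain ⟨M, hM⟩ := exists_norm_le_of_periodicOn_Ici hP hp hper
  obtain ⟨δ, hδ, hδT⟩ := exists_pos_mul_lt (half_pos hε) T
  obtain ⟨d, hd, hmod⟩ := exists_modulus_of_periodicOn_Ici hP hp hper hδ
  have hcell_tendsto : Tendsto (fun ω : ℝ ↦ P / ω) atTop (𝓝 0) :=
    tendsto_const_nhds.div_atTop tendsto_id
  have hrest_tendsto : Tendsto (fun ω : ℝ ↦ M * (P / ω)) atTop (𝓝 0) := by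
    simpa using hcell_tendsto.const_mul M
  filter_upwards [eventually_gt_atTop 0, hcell_tendsto.eventually_le_const hd,
    hrest_tendsto.eventually_lt_const (half_pos hε)] with ω hω hωd hωM t ht
  have hh : 0 < P / ω := div_pos hP hω
  have htT : Icc 0 t ⊆ Icc 0 T := Icc_subset_Icc_right ht.2
  have hbound : ‖∫ s in (0 : ℝ)..t, p s (ω * s)‖ ≤ δ * t + M * (P / ω) := by
    refine norm_integral_le_of_norm_integral_cell_le hh ht.1
      (((continuousOn_along_fast_phase hp hω.le).mono htT).intervalIntegrable_of_Icc ht.1)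
      (fun a ha hat ↦ ?_) hδ.le fun s hs ↦ hM s (htT hs) _ (mul_nonneg hω.le hs.1)
    refine norm_integral_period_le hP hω hp hper hmean ha (hat.trans ht.2) fun s hs ↦ ?_
    refine hmod s ⟨ha.trans hs.1, hs.2.trans (hat.trans ht.2)⟩ a ⟨ha, by linarith [ht.2]⟩ ?_
    rw [abs_of_nonneg (sub_nonneg.2 hs.1)]
    linarith [hs.2]
  rw [dist_zero_left]
  have hδt : δ * t ≤ T * δ := by rw [mul_comm]; gcongr; exact ht.2
  linarith

end Averaging

section Duhamel

/-- The Duhamel integral `∫₀ᵗ e^{-l(t-s)} r(s) ds`, the solution of `y' = -l y + r`, `y(0) = 0`. -/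
def duhamel (l : ℝ) (r : ℝ → ℝ) (t : ℝ) : ℝ := ∫ s in (0 : ℝ)..t, exp (-l * (t - s)) * r s

variable {l t T R : ℝ} {r : ℝ → ℝ}

theorem duhamel_eq_exp_mul_integral (l : ℝ) (r : ℝ → ℝ) (t : ℝ) :
    duhamel l r t = exp (-l * t) * ∫ s in (0 : ℝ)..t, exp (l * s) * r s := by
  rw [duhamel, ← intervalIntegral.integral_const_mul]
  congr 1 with s
  rw [← mul_assoc, ← exp_add]
  ring_nf

theorem continuousOn_duhamel (hr : ContinuousOn r (Icc 0 T)) :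
    ContinuousOn (duhamel l r) (Icc 0 T) := by
  rcases lt_or_ge T 0 with hT | hT
  · simp [Icc_eq_empty hT.not_ge]
  rw [funext (duhamel_eq_exp_mul_integral l r)]
  rw [← uIcc_of_le hT] at hr ⊢
  refine ContinuousOn.mul (by fun_prop) (intervalIntegral.continuousOn_primitive_interval ?_)
  exact ContinuousOn.integrableOn_uIcc (ContinuousOn.mul (by fun_prop) hr)

theorem hasDerivAt_duhamel (hr : ContinuousOn r (Icc 0 T)) (ht : t ∈ Ioo 0 T) :
    HasDerivAt (duhamel l r) (r t - l * duhamel l r t) t := by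
  have hcont : ContinuousOn (fun s ↦ exp (l * s) * r s) (Icc 0 T) :=
    ContinuousOn.mul (by fun_prop) hr
  have hint : HasDerivAt (fun t ↦ ∫ s in (0 : ℝ)..t, exp (l * s) * r s) (exp (l * t) * r t) t :=
    intervalIntegral.integral_hasDerivAt_right
      ((hcont.mono (Icc_subset_Icc_right ht.2.le)).intervalIntegrable_of_Icc ht.1.le)
      ((hcont.mono Ioo_subset_Icc_self).stronglyMeasurableAtFilter isOpen_Ioo t ht)
      (hcont.continuousAt (Icc_mem_nhds ht.1 ht.2))
  have hexp : HasDerivAt (fun t ↦ exp (-l * t)) (exp (-l * t) * (-l * 1)) t :=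
    ((hasDerivAt_id t).const_mul (-l)).exp
  rw [funext (duhamel_eq_exp_mul_integral l r)]
  refine (hexp.mul hint).congr_deriv ?_
  have hcancel : exp (-l * t) * exp (l * t) = 1 := by rw [← exp_add]; simp
  linear_combination r t * hcancel

theorem duhamel_add {q : ℝ → ℝ} (ht : 0 ≤ t) (hr : ContinuousOn r (Icc 0 t))
    (hq : ContinuousOn q (Icc 0 t)) :
    duhamel l (fun s ↦ r s + q s) t = duhamel l r t + duhamel l q t := by
  simp only [duhamel, mul_add]
  exact intervalIntegral.integral_add
    ((ContinuousOn.mul (by fun_prop) hr).intervalIntegrable_of_Icc ht)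
    ((ContinuousOn.mul (by fun_prop) hq).intervalIntegrable_of_Icc ht)

theorem integral_exp_neg_mul_sub (hl : l ≠ 0) :
    ∫ s in (0 : ℝ)..t, exp (-l * (t - s)) = (1 - exp (-l * t)) / l := by
  have hderiv (s : ℝ) : HasDerivAt (fun s ↦ exp (-l * (t - s)) / l) (exp (-l * (t - s))) s := by
    have hlin : HasDerivAt (fun s ↦ -l * (t - s)) l s := by
      simpa using ((hasDerivAt_id s).const_sub t).const_mul (-l)
    simpa [hl] using hlin.exp.div_const l
  rw [intervalIntegral.integral_eq_sub_of_hasDerivAt (fun s _ ↦ hderiv s)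
    (Continuous.intervalIntegrable (by fun_prop) _ _)]
  simp [sub_div]

theorem abs_duhamel_le (hl : 0 < l) (ht : 0 ≤ t) (hR : ∀ s ∈ Icc 0 t, |r s| ≤ R) :
    |duhamel l r t| ≤ R / l := by
  have hR0 : 0 ≤ R := (abs_nonneg _).trans (hR 0 (left_mem_Icc.2 ht))
  have hdom : IntervalIntegrable (fun s ↦ exp (-l * (t - s)) * R) MeasureTheory.volume 0 t :=
    Continuous.intervalIntegrable (by fun_prop) _ _
  rw [duhamel, ← norm_eq_abs]
  calc ‖∫ s in (0 : ℝ)..t, exp (-l * (t - s)) * r s‖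
      ≤ ∫ s in (0 : ℝ)..t, exp (-l * (t - s)) * R := by
        refine intervalIntegral.norm_integral_le_of_norm_le ht (.of_forall fun s hs ↦ ?_)
          hdom
        rw [norm_mul, norm_eq_abs, norm_eq_abs, abs_exp]
        gcongr
        exact hR s (Ioc_subset_Icc_self hs)
    _ = (1 - exp (-l * t)) / l * R := by
        rw [intervalIntegral.integral_mul_const, integral_exp_neg_mul_sub hl.ne']
    _ ≤ 1 / l * R := by gcongr; linarith [exp_pos (-l * t)]
    _ = R / l := by ring

theorem tendstoUniformlyOn_duhamel_of_mean_zero {p : ℝ → ℝ → ℝ} {P : ℝ} (hP : 0 < P) (hl : 0 ≤ l)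
    (hp : ContinuousOn (fun q : ℝ × ℝ ↦ p q.1 q.2) (Icc 0 T ×ˢ Ici 0))
    (hper : ∀ t ∈ Icc 0 T, ∀ τ ∈ Ici (0 : ℝ), p t (τ + P) = p t τ)
    (hmean : ∀ t ∈ Icc 0 T, ∫ τ in (0 : ℝ)..P, p t τ = 0) :
    TendstoUniformlyOn (fun ω t ↦ duhamel l (fun s ↦ p s (ω * s)) t) (fun _ ↦ 0) atTop
      (Icc 0 T) := by
  -- The weight `exp (l * s)` depends on the slow variable only, so it keeps the zero mean.
  have hweighted := tendstoUniformlyOn_integral_of_mean_zero (p := fun s τ ↦ exp (l * s) * p s τ)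
    hP (ContinuousOn.mul (by fun_prop) hp) (fun t ht τ hτ ↦ by rw [hper t ht τ hτ])
    (fun t ht ↦ by rw [intervalIntegral.integral_const_mul, hmean t ht, mul_zero])
  rw [Metric.tendstoUniformlyOn_iff] at hweighted ⊢
  intro ε hε
  filter_upwards [hweighted ε hε] with ω hω t ht
  refine lt_of_le_of_lt ?_ (hω t ht)
  rw [dist_zero_left, dist_zero_left, duhamel_eq_exp_mul_integral, norm_mul, norm_eq_abs, abs_exp]
  exact mul_le_of_le_one_left (norm_nonneg _)
    (exp_le_one_iff.2 (mul_nonpos_of_nonpos_of_nonneg (neg_nonpos.2 hl) ht.1))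

end Duhamel

section MaximumPrinciple

theorem second_deriv_nonpos_of_isLocalMax {f f' : ℝ → ℝ} {f'' x : ℝ} (hmax : IsLocalMax f x)
    (hf : ∀ᶠ y in 𝓝 x, HasDerivAt f (f' y) y) (hf' : HasDerivAt f' f'' x) : f'' ≤ 0 := by
  have hderiv : deriv f =ᶠ[𝓝 x] f' := hf.mono fun _ hy ↦ hy.deriv
  have hderiv2 : deriv (deriv f) x = f'' := by rw [hderiv.deriv_eq, hf'.deriv]
  by_contra! hpos
  have hmin : IsLocalMin f x := isLocalMin_of_deriv_deriv_pos (hderiv2.symm ▸ hpos)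
    hmax.deriv_eq_zero hf.self_of_nhds.continuousAt
  have hconst : f =ᶠ[𝓝 x] fun _ ↦ f x := by
    filter_upwards [hmax, hmin] with y hle hge using le_antisymm hle hge
  have hzero : deriv (deriv f) x = 0 := by rw [hconst.deriv.deriv_eq]; simp
  linarith

theorem deriv_nonneg_of_isMaxOn_Icc_right {g : ℝ → ℝ} {g' a t : ℝ} (hat : a < t)
    (hmax : IsMaxOn g (Icc a t) t) (hg : HasDerivAt g g' t) : 0 ≤ g' := by
  have hle := hmax.localize.hasFDerivWithinAt_nonpos hg.hasFDerivAt.hasFDerivWithinAt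
    (sub_mem_posTangentConeAt_of_segment_subset
      ((convex_Icc a t).segment_subset (right_mem_Icc.2 hat.le) (left_mem_Icc.2 hat.le)))
  rw [ContinuousLinearMap.toSpanSingleton_apply, smul_eq_mul] at hle
  exact nonneg_of_mul_nonpos_right hle (sub_neg.2 hat)

variable {a b T M x t : ℝ} {w wt wx wxx : ℝ → ℝ → ℝ}

theorem nonpos_of_strict_heat_subsolution
    (hw : ContinuousOn (fun p : ℝ × ℝ ↦ w p.1 p.2) (Icc a b ×ˢ Icc 0 T))
    (hbottom : ∀ x ∈ Icc a b, w x 0 ≤ 0) (hsides : ∀ t ∈ Icc 0 T, w a t ≤ 0 ∧ w b t ≤ 0)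
    (hsub : ∀ x ∈ Ioo a b, ∀ t ∈ Ioc 0 T,
      HasDerivAt (fun t' ↦ w x t') (wt x t) t ∧ HasDerivAt (fun x' ↦ w x' t) (wx x t) x ∧
      HasDerivAt (fun x' ↦ wx x' t) (wxx x t) x ∧ wt x t < wxx x t)
    (hx : x ∈ Icc a b) (ht : t ∈ Icc 0 T) : w x t ≤ 0 := by
  obtain ⟨⟨y, s⟩, ⟨hy, hs⟩, hmax⟩ :=
    (isCompact_Icc.prod isCompact_Icc).exists_isMaxOn ⟨(x, t), hx, ht⟩ hw
  have hmax' {y' s' : ℝ} (hy' : y' ∈ Icc a b) (hs' : s' ∈ Icc 0 T) : w y' s' ≤ w y s :=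
    hmax (show (y', s') ∈ Icc a b ×ˢ Icc 0 T from ⟨hy', hs'⟩)
  refine (hmax' hx ht).trans ?_
  by_contra! hpos
  have hya : a ≠ y := by rintro rfl; exact hpos.not_ge (hsides s hs).1
  have hyb : y ≠ b := by rintro rfl; exact hpos.not_ge (hsides s hs).2
  have hs0 : 0 ≠ s := by rintro rfl; exact hpos.not_ge (hbottom y hy)
  have hy' : y ∈ Ioo a b := ⟨hy.1.lt_of_ne hya, hy.2.lt_of_ne hyb⟩
  have hs' : s ∈ Ioc 0 T := ⟨hs.1.lt_of_ne hs0, hs.2⟩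
  obtain ⟨hdt, -, hdxx, hlt⟩ := hsub y hy' s hs'
  have hnhds : Ioo a b ∈ 𝓝 y := Ioo_mem_nhds hy'.1 hy'.2
  have htime_max : IsMaxOn (fun s' ↦ w y s') (Icc 0 s) s :=
    fun s' hs' ↦ hmax' hy ⟨hs'.1, hs'.2.trans hs.2⟩
  have hspace_max : IsLocalMax (fun y' ↦ w y' s) y :=
    eventually_of_mem hnhds fun y' hy' ↦ hmax' (Ioo_subset_Icc_self hy') hs
  have hdt_nonneg : 0 ≤ wt y s := deriv_nonneg_of_isMaxOn_Icc_right hs'.1 htime_max hdt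
  have hdxx_nonpos : wxx y s ≤ 0 := second_deriv_nonpos_of_isLocalMax hspace_max
    (eventually_of_mem hnhds fun y' hy' ↦ (hsub y' hy' s hs').2.1) hdxx
  linarith

theorem heat_subsolution_le (hM : 0 ≤ M)
    (hw : ContinuousOn (fun p : ℝ × ℝ ↦ w p.1 p.2) (Icc a b ×ˢ Icc 0 T))
    (hbottom : ∀ x ∈ Icc a b, w x 0 ≤ 0) (hsides : ∀ t ∈ Icc 0 T, w a t ≤ 0 ∧ w b t ≤ 0)
    (hsub : ∀ x ∈ Ioo a b, ∀ t ∈ Ioo 0 T,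
      HasDerivAt (fun t' ↦ w x t') (wt x t) t ∧ HasDerivAt (fun x' ↦ w x' t) (wx x t) x ∧
      HasDerivAt (fun x' ↦ wx x' t) (wxx x t) x ∧ wt x t ≤ wxx x t + M)
    (hx : x ∈ Icc a b) (ht : t ∈ Icc 0 T) : w x t ≤ M * t := by
  have hslope {ε : ℝ} (hε : 0 < ε) {t : ℝ} (ht : t ∈ Ico 0 T) : w x t - (M + ε) * t ≤ 0 := by
    have hslab : Icc 0 t ⊆ Icc 0 T := Icc_subset_Icc_right ht.2.le
    have hcorr {s : ℝ} (hs : s ∈ Icc 0 t) : 0 ≤ (M + ε) * s := mul_nonneg (by linarith) hs.1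
    refine nonpos_of_strict_heat_subsolution (T := t) (w := fun x t ↦ w x t - (M + ε) * t)
      (wt := fun x t ↦ wt x t - (M + ε)) (wx := wx) (wxx := wxx)
      ((hw.mono (prod_mono_right hslab)).sub (by fun_prop))
      (fun x hx ↦ by simpa using hbottom x hx)
      (fun s hs ↦ ⟨by linarith [(hsides s (hslab hs)).1, hcorr hs],
        by linarith [(hsides s (hslab hs)).2, hcorr hs]⟩)
      (fun x hx s hs ↦ ?_) hx (right_mem_Icc.2 ht.1)
    obtain ⟨hdt, hdx, hdxx, hle⟩ := hsub x hx s ⟨hs.1, hs.2.trans_lt ht.2⟩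
    refine ⟨hdt.sub ?_, hdx.sub_const _, hdxx, by linarith⟩
    simpa using (hasDerivAt_id s).const_mul (M + ε)
  have hbelow (t : ℝ) (ht : t ∈ Ico 0 T) : w x t ≤ M * t := by
    refine le_of_forall_pos_le_add fun δ hδ ↦ ?_
    obtain ⟨ε, hε, hεδ⟩ := exists_pos_mul_lt hδ t
    linarith [hslope hε ht]
  rcases ht.1.eq_or_lt with rfl | htpos
  · simpa using hbottom x hx
  have hclosure : closure (Ico 0 T) = Icc 0 T := closure_Ico (htpos.trans_le ht.2).ne
  refine le_on_closure hbelow ?_ (by fun_prop) (hclosure ▸ ht)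
  rw [hclosure]
  exact hw.comp (f := fun s ↦ (x, s)) (by fun_prop) fun s hs ↦ ⟨hx, hs⟩

end MaximumPrinciple

namespace IsClassicalSolution

variable {T : ℝ} {F G u v : ℝ → ℝ → ℝ}

theorem zero : IsClassicalSolution T (fun _ _ ↦ 0) fun _ _ ↦ 0 := by
  refine ⟨continuousOn_const, fun _ _ ↦ rfl, fun _ _ ↦ ⟨rfl, rfl⟩, fun _ _ ↦ 0, fun _ _ ↦ 0,
    fun _ _ ↦ 0, continuousOn_const, continuousOn_const, fun x _ t _ ↦ ?_⟩
  exact ⟨hasDerivAt_const t 0, hasDerivAt_const x 0, hasDerivAt_const x 0, by simp⟩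

theorem add (hu : IsClassicalSolution T F u) (hv : IsClassicalSolution T G v) :
    IsClassicalSolution T (fun x t ↦ F x t + G x t) fun x t ↦ u x t + v x t := by
  obtain ⟨huc, hu0, hus, ut, ux, uxx, hut, huxx, hu⟩ := hu
  obtain ⟨hvc, hv0, hvs, vt, vx, vxx, hvt, hvxx, hv⟩ := hv
  refine ⟨huc.add hvc, fun x hx ↦ by simp [hu0 x hx, hv0 x hx],
    fun t ht ↦ by simp [hus t ht, hvs t ht], fun x t ↦ ut x t + vt x t, fun x t ↦ ux x t + vx x t,
    fun x t ↦ uxx x t + vxx x t, hut.add hvt, huxx.add hvxx, fun x hx t ht ↦ ?_⟩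
  obtain ⟨hut, hux, huxx, hu⟩ := hu x hx t ht
  obtain ⟨hvt, hvx, hvxx, hv⟩ := hv x hx t ht
  exact ⟨hut.add hvt, hux.add hvx, huxx.add hvxx, by linarith⟩

theorem const_mul (c : ℝ) (hu : IsClassicalSolution T F u) :
    IsClassicalSolution T (fun x t ↦ c * F x t) fun x t ↦ c * u x t := by
  obtain ⟨huc, hu0, hus, ut, ux, uxx, hut, huxx, hu⟩ := hu
  refine ⟨continuousOn_const.mul huc, fun x hx ↦ by simp [hu0 x hx],
    fun t ht ↦ by simp [hus t ht], fun x t ↦ c * ut x t, fun x t ↦ c * ux x t,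
    fun x t ↦ c * uxx x t, continuousOn_const.mul hut, continuousOn_const.mul huxx,
    fun x hx t ht ↦ ?_⟩
  obtain ⟨hut, hux, huxx, hu⟩ := hu x hx t ht
  exact ⟨hut.const_mul c, hux.const_mul c, huxx.const_mul c, by simp only [hu, mul_add]⟩

theorem sub (hu : IsClassicalSolution T F u) (hv : IsClassicalSolution T G v) :
    IsClassicalSolution T (fun x t ↦ F x t - G x t) fun x t ↦ u x t - v x t := by
  simpa only [neg_one_mul, ← sub_eq_add_neg] using hu.add (hv.const_mul (-1))

theorem sum {ι : Type*} (s : Finset ι) {F u : ι → ℝ → ℝ → ℝ}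
    (hu : ∀ i ∈ s, IsClassicalSolution T (F i) (u i)) :
    IsClassicalSolution T (fun x t ↦ ∑ i ∈ s, F i x t) fun x t ↦ ∑ i ∈ s, u i x t := by
  induction s using Finset.cons_induction with
  | empty => simpa only [Finset.sum_empty] using zero
  | cons i s hi ih =>
    simp only [Finset.sum_cons]
    exact (hu i (by simp)).add (ih fun j hj ↦ hu j (by simp [hj]))

theorem le_mul_time {M x t : ℝ} (hM : 0 ≤ M) (hu : IsClassicalSolution T F u)
    (hF : ∀ x ∈ Ioo 0 π, ∀ t ∈ Ioo 0 T, F x t ≤ M) (hx : x ∈ Icc 0 π) (ht : t ∈ Icc 0 T) :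
    u x t ≤ M * t := by
  obtain ⟨huc, hu0, hus, ut, ux, uxx, -, -, hu⟩ := hu
  refine heat_subsolution_le (wt := ut) (wx := ux) (wxx := uxx) hM huc (fun x hx ↦ (hu0 x hx).le)
    (fun t ht ↦ ⟨(hus t ht).1.le, (hus t ht).2.le⟩) (fun x hx t ht ↦ ?_) hx ht
  obtain ⟨hut, hux, huxx, hu⟩ := hu x hx t ht
  exact ⟨hut, hux, huxx, by linarith [hF x hx t ht]⟩

theorem abs_le_mul_time {M x t : ℝ} (hM : 0 ≤ M) (hu : IsClassicalSolution T F u)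
    (hF : ∀ x ∈ Ioo 0 π, ∀ t ∈ Ioo 0 T, |F x t| ≤ M) (hx : x ∈ Icc 0 π) (ht : t ∈ Icc 0 T) :
    |u x t| ≤ M * t := by
  refine abs_le'.2 ⟨hu.le_mul_time hM (fun x hx t ht ↦ (abs_le'.1 (hF x hx t ht)).1) hx ht, ?_⟩
  rw [← neg_one_mul]
  refine (hu.const_mul (-1)).le_mul_time hM (fun x hx t ht ↦ ?_) hx ht
  rw [neg_one_mul]
  exact (abs_le'.1 (hF x hx t ht)).2

theorem sin_mul_duhamel (k : ℕ) {r : ℝ → ℝ} (hr : ContinuousOn r (Icc 0 T)) :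
    IsClassicalSolution T (fun x t ↦ sin (k * x) * r t)
      fun x t ↦ sin (k * x) * duhamel (k ^ 2) r t := by
  have hduh : ContinuousOn (duhamel (k ^ 2) r) (Icc 0 T) := continuousOn_duhamel hr
  have hlift {g : ℝ → ℝ} (hg : ContinuousOn g (Icc 0 T)) :
      ContinuousOn (fun p : ℝ × ℝ ↦ g p.2) (Ioo 0 π ×ˢ Ioo 0 T) :=
    hg.comp continuousOn_snd fun p hp ↦ Ioo_subset_Icc_self hp.2
  refine ⟨ContinuousOn.mul (by fun_prop) (hduh.comp continuousOn_snd fun p hp ↦ hp.2),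
    fun x _ ↦ by simp [duhamel], fun t _ ↦ by simp [sin_nat_mul_pi],
    fun x t ↦ sin (k * x) * (r t - k ^ 2 * duhamel (k ^ 2) r t),
    fun x t ↦ cos (k * x) * k * duhamel (k ^ 2) r t,
    fun x t ↦ -sin (k * x) * k * k * duhamel (k ^ 2) r t,
    ContinuousOn.mul (by fun_prop) ((hlift hr).sub (continuousOn_const.mul (hlift hduh))),
    ContinuousOn.mul (by fun_prop) (hlift hduh), fun x _ t ht ↦ ?_⟩
  have hlin : HasDerivAt (fun x : ℝ ↦ k * x) k x := by
    simpa using (hasDerivAt_id x).const_mul (k : ℝ)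
  exact ⟨(hasDerivAt_duhamel hr ht).const_mul _, hlin.sin.mul_const _,
    (hlin.cos.mul_const _).mul_const _, by ring⟩

end IsClassicalSolution

section SineSeries

/-- The sine polynomial `∑ₙ aₙ sin((n+1)x)`; the index is shifted because the frequency `0`
contributes nothing. -/
def sinePoly (a : ℕ →₀ ℝ) (x : ℝ) : ℝ := a.sum fun n c ↦ c * sin ((n + 1) * x)

/-- The `n`-th Fourier sine coefficient `(2/π) ∫₀^π f(s) sin(ns) ds` of `f` on `[0,π]`. -/
def sineCoeff (f : ℝ → ℝ) (n : ℕ) : ℝ := 2 / π * ∫ s in (0 : ℝ)..π, f s * sin (n * s)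

variable {f g : ℝ → ℝ}

theorem mem_span_sin_iff_exists_sinePoly :
    g ∈ Submodule.span ℝ (range fun (n : ℕ) (x : ℝ) ↦ sin ((n + 1) * x)) ↔
      ∃ a, sinePoly a = g := by
  rw [Finsupp.mem_span_range_iff_exists_finsupp]
  refine exists_congr fun a ↦ iff_of_eq (congrArg (· = g) ?_)
  ext x
  simp [sinePoly, Finsupp.sum]

theorem exists_sinePoly_eq_sin_int_mul (c : ℝ) (k : ℤ) :
    ∃ a, sinePoly a = fun x ↦ c * sin (k * x) := by
  rcases lt_trichotomy k 0 with hk | rfl | hk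
  · obtain ⟨n, rfl⟩ := Int.eq_negSucc_of_lt_zero hk
    refine ⟨.single n (-c), funext fun x ↦ ?_⟩
    have hneg : (Int.negSucc n : ℝ) * x = -((n + 1) * x) := by push_cast [Int.negSucc_eq]; ring
    rw [sinePoly, Finsupp.sum_single_index (zero_mul _), hneg, sin_neg, neg_mul_comm]
  · exact ⟨0, funext fun x ↦ by simp [sinePoly]⟩
  · obtain ⟨n, rfl⟩ := Int.eq_succ_of_zero_lt hk
    exact ⟨.single n c, funext fun x ↦ by simp [sinePoly]⟩

theorem re_smul_fourier_sub_fourier_neg (c : ℂ) (k : ℤ) (x : ℝ) :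
    ((c • fourier k) (x : AddCircle (2 * π)) - (c • fourier k) ((-x : ℝ) : AddCircle (2 * π))).re
      = -2 * c.im * sin (k * x) := by
  have hexp (y : ℝ) :
      fourier k (y : AddCircle (2 * π)) = Complex.exp ((k * y : ℝ) * Complex.I) := by
    rw [fourier_coe_apply]
    congr 1
    push_cast
    have := Complex.ofReal_ne_zero.2 pi_ne_zero
    field_simp
  simp only [ContinuousMap.smul_apply, smul_eq_mul, hexp, Complex.sub_re, Complex.mul_re,
    Complex.exp_ofReal_mul_I_re, Complex.exp_ofReal_mul_I_im, mul_neg, cos_neg, sin_neg]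
  ring

theorem exists_sinePoly_eq_re_sub_neg {p : C(AddCircle (2 * π), ℂ)}
    (hp : p ∈ Submodule.span ℂ (range (fourier (T := 2 * π)))) :
    ∃ a, sinePoly a = fun x : ℝ ↦ (p x - p (-x : ℝ)).re := by
  obtain ⟨c, rfl⟩ := Finsupp.mem_span_range_iff_exists_finsupp.1 hp
  rw [← mem_span_sin_iff_exists_sinePoly]
  have hsum : (fun x : ℝ ↦ ((c.sum fun k z ↦ z • fourier k) (x : AddCircle (2 * π)) -
      (c.sum fun k z ↦ z • fourier k) ((-x : ℝ) : AddCircle (2 * π))).re) =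
      ∑ k ∈ c.support, fun x ↦ -2 * (c k).im * sin (k * x) := by
    ext x
    simp only [← re_smul_fourier_sub_fourier_neg, Finsupp.sum, ContinuousMap.sum_apply,
      ← Finset.sum_sub_distrib, Complex.re_sum, Finset.sum_apply]
  rw [hsum]
  exact Submodule.sum_mem _ fun k _ ↦
    mem_span_sin_iff_exists_sinePoly.2 (exists_sinePoly_eq_sin_int_mul _ k)

theorem exists_continuousMap_addCircle_re_sub_neg_eq (hf : ContinuousOn f (Icc 0 π))
    (hf0 : f 0 = 0) (hfπ : f π = 0) :
    ∃ G : C(AddCircle (2 * π), ℂ), ∀ x ∈ Icc 0 π, (G x - G (-x : ℝ)).re = f x := by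
  have : Fact (0 < 2 * π) := ⟨two_pi_pos⟩
  set k : ℝ → ℝ := IccExtend pi_pos.le ((Icc 0 π).domRestrict f)
  have hk_cont : Continuous k := (continuousOn_iff_continuous_domRestrict.1 hf).Icc_extend'
  have hk_eq {x : ℝ} (hx : x ∈ Icc 0 π) : k x = f x := IccExtend_of_mem _ _ hx
  have hk_neg {x : ℝ} (hx : x ≤ 0) : k x = 0 := (IccExtend_of_le_left _ _ hx).trans hf0
  have hperiod : -π + 2 * π = π := by ring
  have hends : (k (-π) : ℂ) = k (-π + 2 * π) := by
    rw [hperiod, hk_neg (neg_nonpos.2 pi_pos.le), hk_eq (right_mem_Icc.2 pi_pos.le), hfπ]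
  refine ⟨⟨AddCircle.liftIco (2 * π) (-π) fun x ↦ (k x : ℂ),
    AddCircle.liftIco_continuous (f := fun x ↦ (k x : ℂ)) hends (by fun_prop)⟩, fun x hx ↦ ?_⟩
  rcases hx.2.eq_or_lt with rfl | hxπ
  · have hcircle : ((-π : ℝ) : AddCircle (2 * π)) = π := by
      rw [← AddCircle.coe_add_period, hperiod]
    rw [hcircle, sub_self, Complex.zero_re, hfπ]
  · have hlift {y : ℝ} (hy : y ∈ Ico (-π) π) :
        AddCircle.liftIco (2 * π) (-π) (fun x ↦ (k x : ℂ)) (y : AddCircle (2 * π)) = k y :=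
      AddCircle.liftIco_coe_apply (by rwa [hperiod])
    rw [ContinuousMap.coe_mk, hlift ⟨by linarith [hx.1, pi_pos], hxπ⟩,
      hlift ⟨by linarith, by linarith [hx.1, pi_pos]⟩, hk_eq hx, hk_neg (neg_nonpos.2 hx.1),
      Complex.sub_re, Complex.ofReal_re, Complex.ofReal_re, sub_zero]

theorem exists_sinePoly_near (hf : ContinuousOn f (Icc 0 π)) (hf0 : f 0 = 0) (hfπ : f π = 0)
    {η : ℝ} (hη : 0 < η) : ∃ a, ∀ x ∈ Icc 0 π, |f x - sinePoly a x| ≤ η := by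
  obtain ⟨G, hG⟩ := exists_continuousMap_addCircle_re_sub_neg_eq hf hf0 hfπ
  have : Fact (0 < 2 * π) := ⟨two_pi_pos⟩
  have hdense : G ∈ (Submodule.span ℂ (range (fourier (T := 2 * π)))).topologicalClosure := by
    rw [span_fourier_closure_eq_top]; exact Submodule.mem_top
  obtain ⟨p, hp, hpG⟩ := Metric.mem_closure_iff.1 hdense (η / 2) (half_pos hη)
  obtain ⟨a, ha⟩ := exists_sinePoly_eq_re_sub_neg hp
  refine ⟨a, fun x hx ↦ ?_⟩
  have hnear (y : AddCircle (2 * π)) : ‖G y - p y‖ ≤ η / 2 := by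
    rw [← dist_eq_norm]
    exact (G.dist_apply_le_dist y).trans hpG.le
  rw [ha, ← hG x hx, ← Complex.sub_re]
  calc |(G x - G (-x : ℝ) - (p x - p (-x : ℝ))).re|
      ≤ ‖(G x - p x) - (G (-x : ℝ) - p (-x : ℝ))‖ := by
        rw [sub_sub_sub_comm]; exact Complex.abs_re_le_norm _
    _ ≤ η / 2 + η / 2 := norm_sub_le_of_le (hnear _) (hnear _)
    _ = η := add_halves η

theorem integral_cos_int_mul_zero_pi {k : ℤ} (hk : k ≠ 0) :
    ∫ x in (0 : ℝ)..π, cos (k * x) = 0 := by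
  rw [intervalIntegral.integral_comp_mul_left cos (Int.cast_ne_zero.2 hk)]
  simp [sin_int_mul_pi]

theorem integral_sin_mul_sin_zero_pi (m n : ℕ) :
    ∫ x in (0 : ℝ)..π, sin ((m + 1) * x) * sin ((n + 1) * x) = if m = n then π / 2 else 0 := by
  have hprod (x : ℝ) : sin ((m + 1) * x) * sin ((n + 1) * x) =
      (cos (((m - n : ℤ) : ℝ) * x) - cos (((m + n + 2 : ℤ) : ℝ) * x)) / 2 := by
    push_cast
    rw [show ((m : ℝ) - n) * x = (m + 1) * x - (n + 1) * x by ring,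
      show ((m : ℝ) + n + 2) * x = (m + 1) * x + (n + 1) * x by ring, cos_sub, cos_add]
    ring
  simp only [hprod]
  rw [intervalIntegral.integral_div, intervalIntegral.integral_sub
    (Continuous.intervalIntegrable (by fun_prop) _ _)
    (Continuous.intervalIntegrable (by fun_prop) _ _),
    integral_cos_int_mul_zero_pi (k := m + n + 2) (by lia)]
  split_ifs with hmn
  · simp [hmn]
  · rw [integral_cos_int_mul_zero_pi (by lia)]
    simp

theorem continuous_sinePoly (a : ℕ →₀ ℝ) : Continuous (sinePoly a) :=
  continuous_finsetSum _ fun _ _ ↦ by fun_prop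

theorem sineCoeff_sinePoly (a : ℕ →₀ ℝ) (n : ℕ) : sineCoeff (sinePoly a) (n + 1) = a n := by
  simp only [sineCoeff, sinePoly, Finsupp.sum, Finset.sum_mul, mul_assoc, Nat.cast_add_one]
  rw [intervalIntegral.integral_finsetSum
    fun k _ ↦ Continuous.intervalIntegrable (by fun_prop) _ _]
  simp only [intervalIntegral.integral_const_mul, integral_sin_mul_sin_zero_pi, mul_ite, mul_zero]
  rw [Finset.sum_ite_eq']
  simp only [Finsupp.mem_support_iff, ne_eq, ite_not]
  split_ifs with han
  · simp [han]
  · field_simp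

theorem sineCoeff_sub (hf : ContinuousOn f (Icc 0 π)) (hg : ContinuousOn g (Icc 0 π)) (n : ℕ) :
    sineCoeff (fun x ↦ f x - g x) n = sineCoeff f n - sineCoeff g n := by
  simp only [sineCoeff, sub_mul]
  rw [intervalIntegral.integral_sub, mul_sub]
  · exact (hf.mul (by fun_prop)).intervalIntegrable_of_Icc pi_pos.le
  · exact (hg.mul (by fun_prop)).intervalIntegrable_of_Icc pi_pos.le

theorem abs_sineCoeff_le {B : ℝ} (hB : ∀ x ∈ Icc 0 π, |f x| ≤ B) (n : ℕ) :
    |sineCoeff f n| ≤ 2 * B := by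
  have hint : ‖∫ s in (0 : ℝ)..π, f s * sin (n * s)‖ ≤ B * |π - 0| :=
    intervalIntegral.norm_integral_le_of_norm_le_const fun s hs ↦ by
      rw [norm_mul]
      have hs' : s ∈ Icc 0 π := Ioc_subset_Icc_self (uIoc_of_le pi_pos.le ▸ hs)
      exact (mul_le_of_le_one_right (norm_nonneg _) (abs_sin_le_one _)).trans (hB s hs')
  rw [sub_zero, abs_of_pos pi_pos, norm_eq_abs] at hint
  rw [sineCoeff, abs_mul, abs_of_pos (by positivity)]
  calc 2 / π * |∫ s in (0 : ℝ)..π, f s * sin (n * s)| ≤ 2 / π * (B * π) := by gcongr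
    _ = 2 * B := by field_simp

end SineSeries

section HeatSeries

/-- The sine series `∑_{n≥1} f_n sin(nx) ∫₀ᵗ e^{-n²(t-s)} r(s) ds`, the only possible classical
solution for the source `f(x) r(t)`; the frequency `n ≥ 1` is written `n + 1` with `n : ℕ`. -/
def heatSeries (f r : ℝ → ℝ) (x t : ℝ) : ℝ :=
  ∑' n : ℕ, sineCoeff f (n + 1) * sin (((n : ℝ) + 1) * x) * duhamel (((n : ℝ) + 1) ^ 2) r t

variable {f g r q : ℝ → ℝ} {B R T t : ℝ}

theorem hasSum_one_div_nat_add_one_sq :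
    HasSum (fun n : ℕ ↦ 1 / ((n : ℝ) + 1) ^ 2) (π ^ 2 / 6) := by
  simpa using (hasSum_nat_add_iff' 1).2 hasSum_zeta_two

theorem abs_heatSeries_term_le (hf : ∀ x ∈ Icc 0 π, |f x| ≤ B) (ht : 0 ≤ t)
    (hr : ∀ s ∈ Icc 0 t, |r s| ≤ R) (n : ℕ) (x : ℝ) :
    |sineCoeff f (n + 1) * sin (((n : ℝ) + 1) * x) * duhamel (((n : ℝ) + 1) ^ 2) r t| ≤
      2 * B * R * (1 / ((n : ℝ) + 1) ^ 2) := by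
  have hcoeff : |sineCoeff f (n + 1)| ≤ 2 * B := abs_sineCoeff_le hf _
  have hduhamel : |duhamel (((n : ℝ) + 1) ^ 2) r t| ≤ R / ((n : ℝ) + 1) ^ 2 :=
    abs_duhamel_le (by positivity) ht hr
  have hB : 0 ≤ 2 * B := (abs_nonneg _).trans hcoeff
  rw [abs_mul, abs_mul]
  calc |sineCoeff f (n + 1)| * |sin (((n : ℝ) + 1) * x)| * |duhamel (((n : ℝ) + 1) ^ 2) r t|
      ≤ 2 * B * 1 * (R / ((n : ℝ) + 1) ^ 2) := by
        gcongr
        exact abs_sin_le_one _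
    _ = 2 * B * R * (1 / ((n : ℝ) + 1) ^ 2) := by ring

theorem summable_heatSeries (hf : ContinuousOn f (Icc 0 π)) (ht : 0 ≤ t)
    (hr : ContinuousOn r (Icc 0 t)) (x : ℝ) :
    Summable fun n : ℕ ↦
      sineCoeff f (n + 1) * sin (((n : ℝ) + 1) * x) * duhamel (((n : ℝ) + 1) ^ 2) r t := by
  obtain ⟨B, hB⟩ := isCompact_Icc.exists_bound_of_continuousOn hf
  obtain ⟨R, hR⟩ := isCompact_Icc.exists_bound_of_continuousOn hr
  exact .of_norm_bounded (hasSum_one_div_nat_add_one_sq.summable.mul_left (2 * B * R))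
    fun n ↦ abs_heatSeries_term_le hB ht hR n x

theorem abs_heatSeries_le (hf : ∀ x ∈ Icc 0 π, |f x| ≤ B) (ht : 0 ≤ t)
    (hr : ∀ s ∈ Icc 0 t, |r s| ≤ R) (x : ℝ) :
    |heatSeries f r x t| ≤ 2 * B * R * (π ^ 2 / 6) :=
  tsum_of_norm_bounded (E := ℝ) (hasSum_one_div_nat_add_one_sq.mul_left (2 * B * R))
    fun n ↦ abs_heatSeries_term_le hf ht hr n x

theorem continuousOn_heatSeries (hf : ContinuousOn f (Icc 0 π)) (hr : ContinuousOn r (Icc 0 T)) :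
    ContinuousOn (fun p : ℝ × ℝ ↦ heatSeries f r p.1 p.2) (univ ×ˢ Icc 0 T) := by
  obtain ⟨B, hB⟩ := isCompact_Icc.exists_bound_of_continuousOn hf
  obtain ⟨R, hR⟩ := isCompact_Icc.exists_bound_of_continuousOn hr
  refine continuousOn_tsum (fun n ↦ ?_)
    (hasSum_one_div_nat_add_one_sq.summable.mul_left (2 * B * R)) fun n p hp ↦
      abs_heatSeries_term_le hB hp.2.1 (fun s hs ↦ hR s ⟨hs.1, hs.2.trans hp.2.2⟩) n p.1
  exact ContinuousOn.mul (by fun_prop)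
    ((continuousOn_duhamel hr).comp continuousOn_snd fun p hp ↦ hp.2)

theorem heatSeries_sub (hf : ContinuousOn f (Icc 0 π)) (hg : ContinuousOn g (Icc 0 π))
    (ht : 0 ≤ t) (hr : ContinuousOn r (Icc 0 t)) (x : ℝ) :
    heatSeries (fun x ↦ f x - g x) r x t = heatSeries f r x t - heatSeries g r x t := by
  simp only [heatSeries, sineCoeff_sub hf hg, sub_mul]
  exact (summable_heatSeries hf ht hr x).tsum_sub (summable_heatSeries hg ht hr x)

theorem heatSeries_add_right (hf : ContinuousOn f (Icc 0 π)) (ht : 0 ≤ t)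
    (hr : ContinuousOn r (Icc 0 t)) (hq : ContinuousOn q (Icc 0 t)) (x : ℝ) :
    heatSeries f (fun s ↦ r s + q s) x t = heatSeries f r x t + heatSeries f q x t := by
  simp only [heatSeries, duhamel_add ht hr hq, mul_add]
  exact (summable_heatSeries hf ht hr x).tsum_add (summable_heatSeries hf ht hq x)

theorem heatSeries_sinePoly (a : ℕ →₀ ℝ) (r : ℝ → ℝ) (x t : ℝ) :
    heatSeries (sinePoly a) r x t =
      ∑ n ∈ a.support, a n * (sin ((n + 1 : ℕ) * x) * duhamel ((n + 1 : ℕ) ^ 2) r t) := by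
  simp only [heatSeries, sineCoeff_sinePoly, Nat.cast_add_one, ← mul_assoc]
  exact tsum_eq_sum fun n hn ↦ by simp [Finsupp.notMem_support_iff.1 hn]

theorem isClassicalSolution_heatSeries_sinePoly (a : ℕ →₀ ℝ) (hr : ContinuousOn r (Icc 0 T)) :
    IsClassicalSolution T (fun x t ↦ sinePoly a x * r t) (heatSeries (sinePoly a) r) := by
  convert IsClassicalSolution.sum a.support fun n _ ↦
    (IsClassicalSolution.sin_mul_duhamel (n + 1) hr).const_mul (a n) using 3 with x t x t
  · simp only [sinePoly, Finsupp.sum, Finset.sum_mul, mul_assoc, Nat.cast_add_one]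
  · exact heatSeries_sinePoly a r x t

theorem IsClassicalSolution.eq_heatSeries {u : ℝ → ℝ → ℝ} {x : ℝ}
    (hf : ContinuousOn f (Icc 0 π)) (hf0 : f 0 = 0) (hfπ : f π = 0)
    (hr : ContinuousOn r (Icc 0 T)) (hu : IsClassicalSolution T (fun x t ↦ f x * r t) u)
    (hx : x ∈ Icc 0 π) (ht : t ∈ Icc 0 T) : u x t = heatSeries f r x t := by
  obtain ⟨R, hR⟩ := isCompact_Icc.exists_bound_of_continuousOn hr
  have hR0 : 0 ≤ R := (norm_nonneg _).trans (hR t ht)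
  have hsub : Icc 0 t ⊆ Icc 0 T := Icc_subset_Icc_right ht.2
  refine eq_of_forall_dist_le fun ε hε ↦ ?_
  obtain ⟨η, hη, hηε⟩ := exists_pos_mul_lt hε (R * t + 2 * R * (π ^ 2 / 6))
  obtain ⟨a, ha⟩ := exists_sinePoly_near hf hf0 hfπ hη
  have hmax : |u x t - heatSeries (sinePoly a) r x t| ≤ η * R * t := by
    refine (hu.sub (isClassicalSolution_heatSeries_sinePoly a hr)).abs_le_mul_time (by positivity)
      (fun x hx t ht ↦ ?_) hx ht
    rw [← sub_mul, abs_mul]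
    exact mul_le_mul (ha x (Ioo_subset_Icc_self hx)) (hR t (Ioo_subset_Icc_self ht))
      (abs_nonneg _) hη.le
  have hseries : |heatSeries f r x t - heatSeries (sinePoly a) r x t| ≤
      2 * η * R * (π ^ 2 / 6) := by
    rw [← heatSeries_sub hf (continuous_sinePoly a).continuousOn ht.1 (hr.mono hsub)]
    exact abs_heatSeries_le ha ht.1 (fun s hs ↦ hR s (hsub hs)) x
  rw [abs_sub_comm] at hseries
  rw [dist_eq]
  linarith [abs_sub_le (u x t) (heatSeries (sinePoly a) r x t) (heatSeries f r x t)]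

theorem tendstoUniformlyOn_heatSeries_zero {ι : Type*} {l : Filter ι} {r : ι → ℝ → ℝ}
    (hf : ContinuousOn f (Icc 0 π)) (hr : ∀ᶠ i in l, ∀ s ∈ Icc 0 T, |r i s| ≤ R)
    (hduhamel : ∀ n : ℕ, TendstoUniformlyOn (fun i ↦ duhamel (((n : ℝ) + 1) ^ 2) (r i))
      (fun _ ↦ 0) l (Icc 0 T)) :
    TendstoUniformlyOn (fun i (p : ℝ × ℝ) ↦ heatSeries f (r i) p.1 p.2) (fun _ ↦ 0) l
      (univ ×ˢ Icc 0 T) := by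
  obtain ⟨B, hB⟩ := isCompact_Icc.exists_bound_of_continuousOn hf
  suffices hjoint : Tendsto (fun z : ι × ℝ × ℝ ↦ heatSeries f (r z.1) z.2.1 z.2.2)
      (l ×ˢ 𝓟 (univ ×ˢ Icc 0 T)) (𝓝 (∑' _ : ℕ, 0)) by
    rw [tsum_zero] at hjoint
    exact tendsto_prod_principal_iff.1 hjoint
  refine tendsto_tsum_of_dominated_convergence
    (hasSum_one_div_nat_add_one_sq.summable.mul_left (2 * B * R)) (fun n ↦ ?_) ?_
  · have htime : Tendsto (fun z : ι × ℝ × ℝ ↦ (z.1, z.2.2)) (l ×ˢ 𝓟 (univ ×ˢ Icc 0 T))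
        (l ×ˢ 𝓟 (Icc 0 T)) :=
      tendsto_id.prodMap (tendsto_principal_principal.2 fun p hp ↦ hp.2)
    refine bdd_le_mul_tendsto_zero' |sineCoeff f (n + 1)| (.of_forall fun z ↦ ?_)
      ((tendsto_prod_principal_iff.2 (hduhamel n)).comp htime)
    rw [abs_mul]
    exact mul_le_of_le_one_right (abs_nonneg _) (abs_sin_le_one _)
  · filter_upwards [hr.prod_mk (eventually_principal.2 fun p hp ↦ hp)] with z hz n
    exact abs_heatSeries_term_le hB hz.2.2.1
      (fun s hs ↦ hz.1 s ⟨hs.1, hs.2.trans hz.2.2.2⟩) n z.2.1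

theorem tendstoUniformlyOn_heatSeries_of_mean_zero {P : ℝ} {p : ℝ → ℝ → ℝ} (hP : 0 < P)
    (hf : ContinuousOn f (Icc 0 π))
    (hp : ContinuousOn (fun q : ℝ × ℝ ↦ p q.1 q.2) (Icc 0 T ×ˢ Ici 0))
    (hper : ∀ t ∈ Icc 0 T, ∀ τ ∈ Ici (0 : ℝ), p t (τ + P) = p t τ)
    (hmean : ∀ t ∈ Icc 0 T, ∫ τ in (0 : ℝ)..P, p t τ = 0) :
    TendstoUniformlyOn (fun ω (z : ℝ × ℝ) ↦ heatSeries f (fun s ↦ p s (ω * s)) z.1 z.2)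
      (fun _ ↦ 0) atTop (univ ×ˢ Icc 0 T) := by
  obtain ⟨R, hR⟩ := exists_norm_le_of_periodicOn_Ici hP hp hper
  refine tendstoUniformlyOn_heatSeries_zero (R := R) hf ?_ fun n ↦
    tendstoUniformlyOn_duhamel_of_mean_zero hP (sq_nonneg _) hp hper hmean
  filter_upwards [eventually_ge_atTop 0] with ω hω s hs
  exact hR s hs _ (mul_nonneg hω hs.1)

theorem tendstoUniformlyOn_heatSeries_of_isClassicalSolution {P : ℝ} {p : ℝ → ℝ → ℝ}
    {u : ℝ → ℝ → ℝ → ℝ} (hP : 0 < P) (hf : ContinuousOn f (Icc 0 π)) (hf0 : f 0 = 0)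
    (hfπ : f π = 0) (hr : ContinuousOn r (Icc 0 T))
    (hp : ContinuousOn (fun q : ℝ × ℝ ↦ p q.1 q.2) (Icc 0 T ×ˢ Ici 0))
    (hper : ∀ t ∈ Icc 0 T, ∀ τ ∈ Ici (0 : ℝ), p t (τ + P) = p t τ)
    (hmean : ∀ t ∈ Icc 0 T, ∫ τ in (0 : ℝ)..P, p t τ = 0)
    (hu : ∀ᶠ ω in atTop, IsClassicalSolution T (fun x t ↦ f x * (r t + p t (ω * t))) (u ω)) :
    TendstoUniformlyOn (fun ω (z : ℝ × ℝ) ↦ u ω z.1 z.2) (fun z ↦ heatSeries f r z.1 z.2) atTop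
      (Icc 0 π ×ˢ Icc 0 T) := by
  have hlimit := Metric.tendstoUniformlyOn_iff.1
    (tendstoUniformlyOn_heatSeries_of_mean_zero hP hf hp hper hmean)
  refine Metric.tendstoUniformlyOn_iff.2 fun ε hε ↦ ?_
  filter_upwards [hlimit ε hε, hu, eventually_ge_atTop 0] with ω hsmall hsol hω z hz
  have hfast := continuousOn_along_fast_phase hp hω
  have hsub : Icc 0 z.2 ⊆ Icc 0 T := Icc_subset_Icc_right hz.2.2
  rw [hsol.eq_heatSeries (r := fun t ↦ r t + p t (ω * t)) hf hf0 hfπ (hr.add hfast) hz.1 hz.2,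
    heatSeries_add_right hf hz.2.1 (hr.mono hsub) (hfast.mono hsub), dist_self_add_right,
    ← dist_zero_left]
  exact hsmall z ⟨mem_univ _, hz.2⟩

end HeatSeries

theorem leading_term_asymptotics_general
    (T : ℝ) (f : ℝ → ℝ) (hf : ContinuousOn f (Icc 0 π)) (hf0 : f 0 = 0) (hfπ : f π = 0)
    (r0 : ℝ → ℝ) (r1 : ℝ → ℝ → ℝ)
    (hr0 : ContinuousOn r0 (Icc 0 T))
    (hper : ∀ t ∈ Icc (0 : ℝ) T, ∀ τ ∈ Ici (0 : ℝ), r1 t (τ + 2 * π) = r1 t τ)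
    (hzero : ∀ t ∈ Icc (0 : ℝ) T, (∫ τ in (0 : ℝ)..(2 * π), r1 t τ) = 0)
    (hr1c : ContinuousOn (fun p : ℝ × ℝ ↦ r1 p.1 p.2) (Icc 0 T ×ˢ Ici 0))
    (fn : ℕ → ℝ)
    (hfn : ∀ n : ℕ, fn n = (2 / π) * ∫ s in (0 : ℝ)..π, f s * sin ((n : ℝ) * s))
    (u0 : ℝ → ℝ → ℝ)
    (hu0 : ∀ x t, u0 x t = ∑' n : ℕ, fn (n + 1) * sin (((n : ℝ) + 1) * x) *
      ∫ s in (0 : ℝ)..t, exp (-((n : ℝ) + 1) ^ 2 * (t - s)) * r0 s) :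
    (∀ x ∈ Icc (0 : ℝ) π, ∀ t ∈ Icc (0 : ℝ) T,
      Summable fun n : ℕ ↦ fn (n + 1) * sin (((n : ℝ) + 1) * x) *
        ∫ s in (0 : ℝ)..t, exp (-((n : ℝ) + 1) ^ 2 * (t - s)) * r0 s) ∧
    ContinuousOn (fun p : ℝ × ℝ ↦ u0 p.1 p.2) (Icc 0 π ×ˢ Icc 0 T) ∧
    (∀ u : ℝ → ℝ → ℝ → ℝ,
      (∀ ω : ℝ, 1 ≤ ω →
        IsClassicalSolution T (fun x t ↦ f x * (r0 t + r1 t (ω * t))) (u ω)) →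
      ∀ ε > 0, ∃ ω₀ ≥ (1 : ℝ), ∀ ω ≥ ω₀, ∀ x ∈ Icc (0 : ℝ) π, ∀ t ∈ Icc (0 : ℝ) T,
        |u ω x t - u0 x t| ≤ ε) := by
  obtain rfl : fn = sineCoeff f := funext hfn
  obtain rfl : u0 = heatSeries f r0 := funext₂ hu0
  refine ⟨fun x _ t ht ↦ summable_heatSeries hf ht.1 (hr0.mono (Icc_subset_Icc_right ht.2)) x,
    (continuousOn_heatSeries hf hr0).mono (prod_mono_left (subset_univ _)), fun u hu ε hε ↦ ?_⟩
  have hlimit := tendstoUniformlyOn_heatSeries_of_isClassicalSolution two_pi_pos hf hf0 hfπ hr0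
    hr1c hper hzero (eventually_atTop.2 ⟨1, hu⟩)
  obtain ⟨ω₀, hω₀⟩ := eventually_atTop.1 (Metric.tendstoUniformlyOn_iff.1 hlimit ε hε)
  refine ⟨max ω₀ 1, le_max_right _ _, fun ω hω x hx t ht ↦ ?_⟩
  rw [abs_sub_comm]
  exact (hω₀ ω ((le_max_left _ _).trans hω) (x, t) ⟨hx, ht⟩).le

/-- **Theorem 3.** The leading term of the asymptotics: the averaged series `u₀` is well
defined and continuous on `Π̄` and the solutions `u_ω` converge to it uniformly on `Π̄`. -/
theorem leading_term_asymptotics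
    (T : ℝ) (hT : 0 < T)
    -- `f ∈ C¹([0,π])`, `f(0) = f(π) = 0`
    (f f' : ℝ → ℝ)
    (hf' : ∀ x ∈ Icc (0:ℝ) π, HasDerivWithinAt f (f' x) (Icc 0 π) x)
    (hf'c : ContinuousOn f' (Icc 0 π)) (hf0 : f 0 = 0) (hfπ : f π = 0)
    -- `r₀` continuous, `r₁` of class `C^{α,0}`, 2π-periodic in `τ` with zero mean
    (r0 : ℝ → ℝ) (r1 : ℝ → ℝ → ℝ)
    (hr0 : ContinuousOn r0 (Icc 0 T))
    (hper : ∀ t ∈ Icc (0:ℝ) T, ∀ τ ∈ Ici (0:ℝ), r1 t (τ + 2 * π) = r1 t τ)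
    (hzero : ∀ t ∈ Icc (0:ℝ) T, (∫ τ in (0:ℝ)..(2 * π), r1 t τ) = 0)
    (α : ℝ) (hα : α ∈ Ioo (0:ℝ) 1) (C : ℝ)
    (hr1c : ContinuousOn (fun p : ℝ × ℝ => r1 p.1 p.2) (Icc 0 T ×ˢ Ici 0))
    (hr1hold : ∀ τ ∈ Ici (0:ℝ), ∀ t ∈ Icc (0:ℝ) T, ∀ t' ∈ Icc (0:ℝ) T,
      |r1 t τ - r1 t' τ| ≤ C * |t - t'| ^ α)
    -- Fourier coefficients of `f` and the averaged solution `u₀`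
    (fn : ℕ → ℝ)
    (hfn : ∀ n : ℕ, fn n = (2 / π) * ∫ s in (0:ℝ)..π, f s * sin ((n:ℝ) * s))
    (u0 : ℝ → ℝ → ℝ)
    (hu0 : ∀ x t, u0 x t = ∑' n : ℕ, fn (n + 1) * sin (((n:ℝ) + 1) * x) *
      ∫ s in (0:ℝ)..t, exp (-((n:ℝ) + 1) ^ 2 * (t - s)) * r0 s) :
    -- `u₀` is well defined (the series converges) and continuous on `Π̄`
    (∀ x ∈ Icc (0:ℝ) π, ∀ t ∈ Icc (0:ℝ) T,
      Summable fun n : ℕ => fn (n + 1) * sin (((n:ℝ) + 1) * x) *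
        ∫ s in (0:ℝ)..t, exp (-((n:ℝ) + 1) ^ 2 * (t - s)) * r0 s) ∧
    ContinuousOn (fun p : ℝ × ℝ => u0 p.1 p.2) (Icc 0 π ×ˢ Icc 0 T) ∧
    -- uniform convergence `‖u_ω − u₀‖_{C(Π̄)} = o(1)`, `ω → ∞`
    (∀ u : ℝ → ℝ → ℝ → ℝ,
      (∀ ω : ℝ, 1 ≤ ω →
        IsClassicalSolution T (fun x t => f x * (r0 t + r1 t (ω * t))) (u ω)) →
      ∀ ε > 0, ∃ ω₀ ≥ (1:ℝ), ∀ ω ≥ ω₀, ∀ x ∈ Icc (0:ℝ) π, ∀ t ∈ Icc (0:ℝ) T,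
        |u ω x t - u0 x t| ≤ ε) := by
  exact leading_term_asymptotics_general T f (fun x hx ↦ (hf' x hx).continuousWithinAt) hf0 hfπ
    r0 r1 hr0 hper hzero hr1c fn hfn u0 hu0
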